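/- Let Ω ⊆ ℝⁿ be bounded open convex and (u_k) a sequence of convex functions on Ω converging pointwise to a convex function u. Then the Monge-Ampère measures MA(u_k) converge weakly to MA(u), i.e., ∫ f dMA(u_k) → ∫ f dMA(u) for every continuous function f with compact support in Ω. -/

import Mathlib

open scoped RealInnerProductSpace
open MeasureTheory Filter

noncomputable section

/-- The gradient image (subdifferential) of `h` at `x₀` relative to the domain `Ω`. -/
def gradientImage {n : ℕ} (Ω : Set (EuclideanSpace ℝ (Fin n)))
    (h : EuclideanSpace ℝ (Fin n) → ℝ) (x₀ : EuclideanSpace ℝ (Fin n)) :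
    Set (EuclideanSpace ℝ (Fin n)) :=
  {p | ∀ x ∈ Ω, h x₀ + ⟪x - x₀, p⟫ ≤ h x}

open Set Metric Topology in
/-- A pointwise convergent sequence of convex functions is locally equi-Lipschitz. -/
lemma equiLip {n : ℕ} {Ω : Set (EuclideanSpace ℝ (Fin n))} (hΩopen : IsOpen Ω)
    (hΩconv : Convex ℝ Ω)
    {u : ℕ → EuclideanSpace ℝ (Fin n) → ℝ} {ulim : EuclideanSpace ℝ (Fin n) → ℝ}
    (hconv : ∀ k, ConvexOn ℝ Ω (u k))
    (hptwise : ∀ x ∈ Ω, Tendsto (fun k => u k x) atTop (nhds (ulim x)))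
    {x₀ : EuclideanSpace ℝ (Fin n)} (hx₀ : x₀ ∈ Ω) :
    ∃ r > 0, ∃ L : NNReal, ball x₀ r ⊆ Ω ∧ ∀ k, LipschitzOnWith L (u k) (ball x₀ r) := by
  have hbdd : ∀ x ∈ Ω, BddAbove (range fun k => u k x) := fun x hx => (hptwise x hx).bddAbove_range
  obtain ⟨m, hm⟩ := (hptwise x₀ hx₀).bddBelow_range
  have hm' : ∀ k, m ≤ u k x₀ := fun k => hm ⟨k, rfl⟩
  have hv : ConvexOn ℝ Ω (fun x => ⨆ k, u k x) := by
    refine ⟨hΩconv, fun x hx y hy a b ha hb hab => ?_⟩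
    apply ciSup_le
    intro k
    refine ((hconv k).2 hx hy ha hb hab).trans ?_
    exact add_le_add (smul_le_smul_of_nonneg_left (le_ciSup (hbdd x hx) k) ha)
      (smul_le_smul_of_nonneg_left (le_ciSup (hbdd y hy) k) hb)
  have hc : ContinuousAt (fun x => ⨆ k, u k x) x₀ :=
    (hv.continuousOn hΩopen).continuousAt (hΩopen.mem_nhds hx₀)
  set M1 : ℝ := (⨆ k, u k x₀) + 1 with hM1
  have hev : ∀ᶠ x in 𝓝 x₀, (⨆ k, u k x) < M1 ∧ x ∈ Ω :=
    (hc.eventually (gt_mem_nhds (lt_add_one _))).and (hΩopen.mem_nhds hx₀)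
  obtain ⟨r, hr, hball⟩ := Metric.eventually_nhds_iff.1 hev
  have hsub : ball x₀ r ⊆ Ω := fun y hy => (hball hy).2
  have hup : ∀ k, ∀ y, dist y x₀ < r → u k y ≤ M1 := fun k y hy =>
    (le_ciSup (hbdd y (hball hy).2) k).trans (hball hy).1.le
  have hlow : ∀ k, ∀ y, dist y x₀ < r → 2 * m - M1 ≤ u k y := by
    intro k y hy
    have hy' : dist ((2:ℝ) • x₀ - y) x₀ < r := by
      rw [dist_eq_norm] at hy ⊢
      have e0 : (2:ℝ) • x₀ - y - x₀ = -(y - x₀) := by rw [two_smul]; abel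
      rw [e0, norm_neg]
      exact hy
    have h := (hconv k).2 (hball hy).2 (hball hy').2
      (show (0:ℝ) ≤ 1/2 by norm_num) (show (0:ℝ) ≤ 1/2 by norm_num) (by norm_num)
    have e : (1/2 : ℝ) • y + (1/2 : ℝ) • ((2:ℝ) • x₀ - y) = x₀ := by
      rw [smul_sub, smul_smul]; norm_num
    rw [e] at h
    have := hup k _ hy'
    have := hm' k
    simp only [smul_eq_mul] at h
    linarith
  refine ⟨r / 2, by positivity, (2 * (max |M1| |2 * m - M1|) / (r/2)).toNNReal,
    (ball_subset_ball (by linarith)).trans hsub, fun k => ?_⟩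
  have := ((hconv k).subset hsub (convex_ball _ _)).lipschitzOnWith_of_abs_le
    (ε := r / 2) (by positivity) (M := max |M1| |2 * m - M1|) (fun a ha => by
      have h1 := hup k a ha
      have h2 := hlow k a ha
      rw [abs_le]
      constructor
      · have := neg_abs_le (2 * m - M1)
        have := le_max_right |M1| |2 * m - M1|
        linarith
      · exact h1.trans ((le_abs_self _).trans (le_max_left _ _)))
  rwa [show r - r / 2 = r / 2 by ring] at this

open Set Metric Topology in
/-- Continuous convergence. -/
lemma contConv {n : ℕ} {Ω : Set (EuclideanSpace ℝ (Fin n))} (hΩopen : IsOpen Ω)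
    (hΩconv : Convex ℝ Ω)
    {u : ℕ → EuclideanSpace ℝ (Fin n) → ℝ} {ulim : EuclideanSpace ℝ (Fin n) → ℝ}
    (hconv : ∀ k, ConvexOn ℝ Ω (u k))
    (hptwise : ∀ x ∈ Ω, Tendsto (fun k => u k x) atTop (nhds (ulim x)))
    {x : EuclideanSpace ℝ (Fin n)} (hx : x ∈ Ω) {φ : ℕ → ℕ} (hφ : Tendsto φ atTop atTop)
    {y : ℕ → EuclideanSpace ℝ (Fin n)} (hy : Tendsto y atTop (𝓝 x)) :
    Tendsto (fun k => u (φ k) (y k)) atTop (𝓝 (ulim x)) := by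
  obtain ⟨r, hr, L, -, hL⟩ := equiLip hΩopen hΩconv hconv hptwise hx
  have h1 : Tendsto (fun k => u (φ k) x) atTop (𝓝 (ulim x)) := (hptwise x hx).comp hφ
  have h2 : Tendsto (fun k => u (φ k) (y k) - u (φ k) x) atTop (𝓝 0) := by
    have h3 : Tendsto (fun k => (L : ℝ) * dist (y k) x) atTop (𝓝 0) := by
      simpa using (tendsto_iff_dist_tendsto_zero.1 hy).const_mul (L : ℝ)
    refine squeeze_zero_norm' ?_ h3
    filter_upwards [hy (ball_mem_nhds x hr)] with k hk
    rw [← dist_eq_norm]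
    exact (hL (φ k)).dist_le_mul _ hk _ (mem_ball_self hr)
  simpa using h2.add h1

open Set Metric Topology in
/-- Uniform bound of the subdifferentials over a compact. -/
lemma gradBound {n : ℕ} {Ω : Set (EuclideanSpace ℝ (Fin n))} (hΩopen : IsOpen Ω)
    (hΩconv : Convex ℝ Ω)
    {u : ℕ → EuclideanSpace ℝ (Fin n) → ℝ} {ulim : EuclideanSpace ℝ (Fin n) → ℝ}
    (hconv : ∀ k, ConvexOn ℝ Ω (u k))
    (hptwise : ∀ x ∈ Ω, Tendsto (fun k => u k x) atTop (nhds (ulim x)))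
    {K : Set (EuclideanSpace ℝ (Fin n))} (hK : IsCompact K) (hKΩ : K ⊆ Ω) :
    ∃ R : ℝ, ∀ k, ∀ x ∈ K, gradientImage Ω (u k) x ⊆ closedBall 0 R := by
  refine hK.induction_on (p := fun S => ∃ R : ℝ, ∀ k, ∀ x ∈ S,
    gradientImage Ω (u k) x ⊆ closedBall 0 R) ⟨0, by simp⟩ ?_ ?_ ?_
  · rintro s t hst ⟨R, hR⟩
    exact ⟨R, fun k x hx => hR k x (hst hx)⟩
  · rintro s t ⟨R, hR⟩ ⟨R', hR'⟩
    refine ⟨max R R', fun k x hx => ?_⟩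
    rcases hx with hx | hx
    · exact (hR k x hx).trans (closedBall_subset_closedBall (le_max_left _ _))
    · exact (hR' k x hx).trans (closedBall_subset_closedBall (le_max_right _ _))
  · intro x hx
    obtain ⟨r, hr, L, hsub, hL⟩ := equiLip hΩopen hΩconv hconv hptwise (hKΩ hx)
    refine ⟨ball x r, mem_nhdsWithin_of_mem_nhds (ball_mem_nhds x hr), L, ?_⟩
    intro k y hy p hp
    rw [mem_closedBall_zero_iff]
    by_cases hp0 : p = 0
    · simp [hp0]
    have hpn : 0 < ‖p‖ := norm_pos_iff.2 hp0
    have ht : Tendsto (fun t : ℝ => y + t • p) (𝓝[>] 0) (𝓝 y) := by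
      have : Continuous (fun t : ℝ => y + t • p) := by fun_prop
      have := this.tendsto 0
      simp only [zero_smul, add_zero] at this
      exact this.mono_left nhdsWithin_le_nhds
    obtain ⟨t, htb, ht0⟩ := ((ht.eventually (isOpen_ball.mem_nhds hy)).and self_mem_nhdsWithin).exists
    have ht0 : 0 < t := ht0
    have h1 := hp (y + t • p) (hsub htb)
    have h2 := (hL k).dist_le_mul _ htb _ hy
    rw [Real.dist_eq, dist_eq_norm] at h2
    have h3 := (le_abs_self _).trans h2
    simp only [add_sub_cancel_left, inner_smul_left, real_inner_self_eq_norm_sq, norm_smul,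
      Real.norm_eq_abs, abs_of_pos ht0] at h1 h3
    simp only [conj_trivial] at h1
    have h4 : (t * ‖p‖) * ‖p‖ ≤ (t * ‖p‖) * L := by nlinarith
    exact le_of_mul_le_mul_left h4 (by positivity)

open Set Metric Topology in
lemma gradLimit {n : ℕ} {Ω : Set (EuclideanSpace ℝ (Fin n))} (hΩopen : IsOpen Ω)
    (hΩconv : Convex ℝ Ω)
    {u : ℕ → EuclideanSpace ℝ (Fin n) → ℝ} {ulim : EuclideanSpace ℝ (Fin n) → ℝ}
    (hconv : ∀ k, ConvexOn ℝ Ω (u k))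
    (hptwise : ∀ x ∈ Ω, Tendsto (fun k => u k x) atTop (nhds (ulim x)))
    {K : Set (EuclideanSpace ℝ (Fin n))} (hK : IsCompact K) (hKΩ : K ⊆ Ω)
    {φ : ℕ → ℕ} (hφ : Tendsto φ atTop atTop)
    {p : ℕ → EuclideanSpace ℝ (Fin n)}
    (hp : ∀ k, p k ∈ ⋃ x ∈ K, gradientImage Ω (u (φ k)) x) :
    ∃ q ∈ ⋃ x ∈ K, gradientImage Ω ulim x, ∃ ψ : ℕ → ℕ, StrictMono ψ ∧
      Tendsto (p ∘ ψ) atTop (𝓝 q) := by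
  simp only [mem_iUnion, exists_prop] at hp
  choose y hyK hyp using hp
  obtain ⟨R, hR⟩ := gradBound hΩopen hΩconv hconv hptwise hK hKΩ
  obtain ⟨⟨x, q⟩, hxq, ψ, hψ, hlim⟩ := (hK.prod (isCompact_closedBall 0 R)).tendsto_subseq
    (x := fun k => (y k, p k)) (fun k => ⟨hyK k, hR _ _ (hyK k) (hyp k)⟩)
  have h1 : Tendsto (fun k => y (ψ k)) atTop (𝓝 x) := (continuous_fst.tendsto _).comp hlim
  have h2 : Tendsto (fun k => p (ψ k)) atTop (𝓝 q) := (continuous_snd.tendsto _).comp hlim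
  refine ⟨q, ?_, ψ, hψ, h2⟩
  simp only [mem_iUnion, exists_prop]
  refine ⟨x, hxq.1, fun z hz => ?_⟩
  have hφψ : Tendsto (fun k => φ (ψ k)) atTop atTop := hφ.comp hψ.tendsto_atTop
  have h3 := contConv hΩopen hΩconv hconv hptwise (hKΩ hxq.1) hφψ h1
  have h4 : Tendsto (fun k => u (φ (ψ k)) z) atTop (𝓝 (ulim z)) := (hptwise z hz).comp hφψ
  have h5 : Tendsto (fun k => u (φ (ψ k)) (y (ψ k)) + ⟪z - y (ψ k), p (ψ k)⟫) atTop
      (𝓝 (ulim x + ⟪z - x, q⟫)) := h3.add ((tendsto_const_nhds.sub h1).inner h2)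
  exact le_of_tendsto_of_tendsto' h5 h4 (fun k => hyp (ψ k) z hz)

open Set Metric Topology in
lemma gradCompact {n : ℕ} {Ω : Set (EuclideanSpace ℝ (Fin n))} (hΩopen : IsOpen Ω)
    (hΩconv : Convex ℝ Ω) {h : EuclideanSpace ℝ (Fin n) → ℝ} (hh : ConvexOn ℝ Ω h)
    {K : Set (EuclideanSpace ℝ (Fin n))} (hK : IsCompact K) (hKΩ : K ⊆ Ω) :
    IsCompact (⋃ x ∈ K, gradientImage Ω h x) := by
  apply IsSeqCompact.isCompact
  intro p hp
  exact gradLimit (u := fun _ => h) hΩopen hΩconv (fun _ => hh) (fun x _ => tendsto_const_nhds)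
    hK hKΩ tendsto_id hp

open Set Metric Topology in
/-- Upper semicontinuity on compact sets. -/
lemma limsupCompact {n : ℕ} {Ω : Set (EuclideanSpace ℝ (Fin n))} (hΩopen : IsOpen Ω)
    (hΩconv : Convex ℝ Ω)
    {u : ℕ → EuclideanSpace ℝ (Fin n) → ℝ} {ulim : EuclideanSpace ℝ (Fin n) → ℝ}
    (hconv : ∀ k, ConvexOn ℝ Ω (u k))
    (hptwise : ∀ x ∈ Ω, Tendsto (fun k => u k x) atTop (nhds (ulim x)))
    {K : Set (EuclideanSpace ℝ (Fin n))} (hK : IsCompact K) (hKΩ : K ⊆ Ω) :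
    limsup (fun k => volume (⋃ x ∈ K, gradientImage Ω (u k) x)) atTop ≤
      volume (⋃ x ∈ K, gradientImage Ω ulim x) := by
  refine le_of_forall_gt fun c hc => ?_
  obtain ⟨V, hV, hVo, hVc⟩ := Set.exists_isOpen_lt_of_lt _ _ hc
  refine lt_of_le_of_lt ?_ hVc
  refine limsup_le_of_le (by isBoundedDefault) ?_
  have : ∀ᶠ k in atTop, (⋃ x ∈ K, gradientImage Ω (u k) x) ⊆ V := by
    by_contra hcon
    obtain ⟨φ, hφ, hφ'⟩ := extraction_of_frequently_atTop (not_eventually.1 hcon)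
    simp only [not_subset] at hφ'
    choose p hp hpV using hφ'
    obtain ⟨q, hq, ψ, -, hlim⟩ := gradLimit hΩopen hΩconv hconv hptwise hK hKΩ hφ.tendsto_atTop hp
    obtain ⟨k, hk⟩ := (hlim.eventually (hVo.mem_nhds (hV hq))).exists
    exact hpV _ hk
  filter_upwards [this] with k hk using measure_mono hk

open Set Metric Topology in
lemma eventuallyMem {n : ℕ} {Ω : Set (EuclideanSpace ℝ (Fin n))} (hΩopen : IsOpen Ω)
    (hΩconv : Convex ℝ Ω)
    {u : ℕ → EuclideanSpace ℝ (Fin n) → ℝ} {ulim : EuclideanSpace ℝ (Fin n) → ℝ}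
    (hconv : ∀ k, ConvexOn ℝ Ω (u k))
    (hptwise : ∀ x ∈ Ω, Tendsto (fun k => u k x) atTop (nhds (ulim x)))
    {K V : Set (EuclideanSpace ℝ (Fin n))} (hV : IsOpen V) (hKV : K ⊆ V)
    (hVΩ : closure V ⊆ Ω) (hVc : IsCompact (closure V))
    {p : EuclideanSpace ℝ (Fin n)} (hp : p ∈ ⋃ x ∈ K, gradientImage Ω ulim x)
    (hp' : p ∉ ⋃ x ∈ frontier V, gradientImage Ω ulim x) :
    ∀ᶠ k in atTop, p ∈ ⋃ x ∈ V, gradientImage Ω (u k) x := by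
  simp only [mem_iUnion, exists_prop, not_exists, not_and] at hp hp' ⊢
  obtain ⟨x₀, hx₀, hpx₀⟩ := hp
  have hx₀c : x₀ ∈ closure V := subset_closure (hKV hx₀)
  have hmin : ∀ k, ∃ y ∈ closure V, IsMinOn (fun z => u k z - ⟪z, p⟫) (closure V) y := by
    intro k
    refine hVc.exists_isMinOn ⟨x₀, hx₀c⟩ ?_
    exact (((hconv k).continuousOn hΩopen).mono hVΩ).sub (by fun_prop)
  choose y hyV hymin using hmin
  have hfr : ∀ᶠ k in atTop, y k ∉ frontier V := by
    by_contra hcon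
    obtain ⟨φ, hφ, hφ'⟩ := extraction_of_frequently_atTop (not_eventually.1 hcon)
    simp only [not_not] at hφ'
    have hfc : IsCompact (frontier V) := hVc.of_isClosed_subset isClosed_frontier
      frontier_subset_closure
    obtain ⟨x, hx, ψ, hψ, hlim⟩ := hfc.tendsto_subseq hφ'
    refine hp' x hx fun z hz => ?_
    have hφψ : Tendsto (fun k => φ (ψ k)) atTop atTop :=
      hφ.tendsto_atTop.comp hψ.tendsto_atTop
    have hlim' : Tendsto (fun k => y (φ (ψ k))) atTop (𝓝 x) := hlim
    have h3 := contConv hΩopen hΩconv hconv hptwise (hVΩ (frontier_subset_closure hx)) hφψ hlim'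
    have h4 : Tendsto (fun k => u (φ (ψ k)) x₀ - ⟪x₀, p⟫) atTop (𝓝 (ulim x₀ - ⟪x₀, p⟫)) :=
      ((hptwise x₀ (hVΩ hx₀c)).comp hφψ).sub_const _
    have h5 : Tendsto (fun k => u (φ (ψ k)) (y (φ (ψ k))) - ⟪y (φ (ψ k)), p⟫) atTop
        (𝓝 (ulim x - ⟪x, p⟫)) := h3.sub (hlim'.inner tendsto_const_nhds)
    have h6 := le_of_tendsto_of_tendsto' h5 h4 (fun k => hymin (φ (ψ k)) hx₀c)
    have h7 := hpx₀ z hz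
    simp only [inner_sub_left] at h7 ⊢
    linarith
  filter_upwards [hfr] with k hk
  have hyk : y k ∈ V := by
    by_contra h
    exact hk ⟨hyV k, by rwa [hV.interior_eq]⟩
  refine ⟨y k, hyk, ?_⟩
  have hc : ConvexOn ℝ Ω (fun z => u k z - ⟪z, p⟫) := by
    refine (hconv k).sub ?_
    refine ⟨hΩconv, fun a _ b _ s t _ _ _ => ?_⟩
    simp [inner_add_left, inner_smul_left]
  have hloc : IsLocalMinOn (fun z => u k z - ⟪z, p⟫) Ω (y k) :=
    ((hymin k).isLocalMin (mem_of_superset (hV.mem_nhds hyk) subset_closure)).on Ω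
  have hglob := IsMinOn.of_isLocalMinOn_of_convexOn (hVΩ (hyV k)) hloc hc
  intro z hz
  have := hglob hz
  simp only [mem_ofPred_eq] at this
  rw [inner_sub_left]
  linarith

open Set Metric Topology in
/-- Lower semicontinuity on open sets. -/
lemma liminfOpen {n : ℕ} {Ω : Set (EuclideanSpace ℝ (Fin n))} (hΩopen : IsOpen Ω)
    (hΩconv : Convex ℝ Ω) (hΩbd : Bornology.IsBounded Ω)
    {u : ℕ → EuclideanSpace ℝ (Fin n) → ℝ} {ulim : EuclideanSpace ℝ (Fin n) → ℝ}
    (hconv : ∀ k, ConvexOn ℝ Ω (u k)) (hlimconv : ConvexOn ℝ Ω ulim)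
    (hptwise : ∀ x ∈ Ω, Tendsto (fun k => u k x) atTop (nhds (ulim x)))
    {ν : Measure (EuclideanSpace ℝ (Fin n))}
    (hν : ∀ E : Set (EuclideanSpace ℝ (Fin n)), MeasurableSet E → E ⊆ Ω →
      ν E = volume (⋃ x ∈ E, gradientImage Ω ulim x))
    {G : Set (EuclideanSpace ℝ (Fin n))} (hG : IsOpen G) (hGΩ : G ⊆ Ω) :
    ν G ≤ liminf (fun k => volume (⋃ x ∈ G, gradientImage Ω (u k) x)) atTop := by
  obtain ⟨F, hFc, hFG, hFU, hFm⟩ := hG.exists_iUnion_isClosed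
  rw [← hFU, hFm.measure_iUnion, hFU]
  refine iSup_le fun j => ?_
  have hFcomp : IsCompact (F j) :=
    isCompact_of_isClosed_isBounded (hFc j) (hΩbd.subset ((hFG j).trans hGΩ))
  obtain ⟨V, hV, hKV, hVG, hVc⟩ := exists_open_between_and_isCompact_closure hFcomp hG (hFG j)
  have hVΩ := hVG.trans hGΩ
  have hfrΩ : frontier V ⊆ Ω := frontier_subset_closure.trans hVΩ
  have hfc : IsCompact (frontier V) := hVc.of_isClosed_subset isClosed_frontier
    frontier_subset_closure
  have hKΩ := (hFG j).trans hGΩ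
  have hdisj : Disjoint (F j) (frontier V) := by
    rw [Set.disjoint_left]
    intro x hx hx'
    exact hx'.2 (by rw [hV.interior_eq]; exact hKV hx)
  set A := ⋃ x ∈ F j, gradientImage Ω ulim x with hA
  set B := ⋃ x ∈ frontier V, gradientImage Ω ulim x with hB
  have hAc : IsCompact A := gradCompact hΩopen hΩconv hlimconv hFcomp hKΩ
  have hBc : IsCompact B := gradCompact hΩopen hΩconv hlimconv hfc hfrΩ
  have hnull : volume (A ∩ B) = 0 := by
    have h1 := measure_union hdisj hfc.measurableSet (μ := ν)
    rw [hν _ (hFcomp.measurableSet.union hfc.measurableSet) (union_subset hKΩ hfrΩ),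
      hν _ hFcomp.measurableSet hKΩ, hν _ hfc.measurableSet hfrΩ, biUnion_union,
      ← hA, ← hB] at h1
    have h2 := measure_union_add_inter' hAc.measurableSet B (μ := volume)
    rw [← h1] at h2
    have h3 : volume (A ∪ B) ≠ ⊤ := (hAc.union hBc).measure_ne_top
    exact (ENNReal.add_right_inj h3).1 (by rw [h2, add_zero])
  rw [hν _ hFcomp.measurableSet hKΩ, ← hA]
  set S : ℕ → Set (EuclideanSpace ℝ (Fin n)) :=
    fun i => {p | ∀ k ≥ i, p ∈ ⋃ x ∈ V, gradientImage Ω (u k) x} with hS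
  have hSm : Monotone S := fun i i' hii p hp k hk => hp k (hii.trans hk)
  have hAS : A ⊆ (A ∩ B) ∪ ⋃ i, S i := by
    intro p hp
    by_cases hpB : p ∈ B
    · exact Or.inl ⟨hp, hpB⟩
    · right
      obtain ⟨i, hi⟩ := eventually_atTop.1
        (eventuallyMem hΩopen hΩconv hconv hptwise hV hKV hVΩ hVc hp hpB)
      exact mem_iUnion.2 ⟨i, hi⟩
  calc volume A ≤ volume (A ∩ B) + volume (⋃ i, S i) :=
        (measure_mono hAS).trans (measure_union_le _ _)
    _ = ⨆ i, volume (S i) := by rw [hnull, zero_add, hSm.measure_iUnion]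
    _ ≤ _ := by
      refine iSup_le fun i => ?_
      refine le_liminf_of_le (by isBoundedDefault) ?_
      filter_upwards [eventually_ge_atTop i] with k hk
      refine measure_mono fun p hp => ?_
      exact biUnion_subset_biUnion_left (subset_closure.trans hVG) (hp k hk)

open Set Metric Topology in
lemma nonnegCase {n : ℕ} {Ω : Set (EuclideanSpace ℝ (Fin n))} (hΩopen : IsOpen Ω)
    {μ : ℕ → Measure (EuclideanSpace ℝ (Fin n))} {ν : Measure (EuclideanSpace ℝ (Fin n))}
    (hfin : ∀ K ⊆ Ω, IsCompact K → ∃ C : ENNReal, C ≠ ⊤ ∧ ∀ k, μ k K ≤ C)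
    (hsup : ∀ K ⊆ Ω, IsCompact K → limsup (fun k => μ k K) atTop ≤ ν K)
    (hinf : ∀ G ⊆ Ω, IsOpen G → ν G ≤ liminf (fun k => μ k G) atTop)
    {f : EuclideanSpace ℝ (Fin n) → ℝ} (hf : Continuous f) (hfc : HasCompactSupport f)
    (hfΩ : tsupport f ⊆ Ω) (hf0 : 0 ≤ f) :
    Tendsto (fun k => ∫⁻ x, ENNReal.ofReal (f x) ∂(μ k)) atTop
      (𝓝 (∫⁻ x, ENNReal.ofReal (f x) ∂ν)) := by
  have hres : ∀ m : Measure (EuclideanSpace ℝ (Fin n)),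
      ∫⁻ x, ENNReal.ofReal (f x) ∂m = ∫⁻ x, ENNReal.ofReal (f x) ∂(m.restrict Ω) := by
    intro m
    rw [setLIntegral_eq_of_support_subset]
    intro x hx
    apply hfΩ
    apply subset_tsupport
    intro h0
    simp [h0] at hx
  refine tendsto_of_le_liminf_of_limsup_le ?_ ?_
  · rw [hres ν, show (fun k => ∫⁻ x, ENNReal.ofReal (f x) ∂(μ k)) =
      fun k => ∫⁻ x, ENNReal.ofReal (f x) ∂((μ k).restrict Ω) from funext fun k => hres (μ k)]
    refine lintegral_le_liminf_lintegral_of_forall_isOpen_measure_le_liminf_measure hf hf0 ?_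
    intro G hG
    simp_rw [Measure.restrict_apply hG.measurableSet]
    exact hinf _ inter_subset_right (hG.inter hΩopen)
  · simp_rw [fun m : Measure (EuclideanSpace ℝ (Fin n)) => lintegral_eq_lintegral_meas_le m
      (Eventually.of_forall hf0) hf.aemeasurable]
    have hsub : ∀ t : ℝ, 0 < t → {a | t ≤ f a} ⊆ tsupport f := by
      intro t ht a ha
      apply subset_tsupport
      have ha : t ≤ f a := ha
      exact (ht.trans_le ha).ne'
    have hcomp : ∀ t : ℝ, 0 < t → IsCompact {a | t ≤ f a} := fun t ht =>
      IsCompact.of_isClosed_subset hfc (isClosed_le continuous_const hf) (hsub t ht)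
    obtain ⟨C, hC, hCk⟩ := hfin _ hfΩ hfc
    obtain ⟨M, hM⟩ := hf.bounded_above_of_compact_support hfc
    refine (limsup_lintegral_le (indicator (Ioc 0 M) fun _ => C) ?_ ?_ ?_).trans ?_
    · intro k
      apply Antitone.measurable
      intro s t hst
      exact measure_mono fun a (ha : t ≤ f a) => hst.trans ha
    · intro k
      refine (ae_restrict_iff' measurableSet_Ioi).2 (Eventually.of_forall fun t ht => ?_)
      by_cases htM : t ≤ M
      · rw [indicator_of_mem (show t ∈ Ioc 0 M from ⟨ht, htM⟩)]
        exact (measure_mono (hsub t ht)).trans (hCk k)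
      · have : {a | t ≤ f a} = ∅ := by
          ext a
          simp only [mem_ofPred_eq, mem_empty_iff_false, iff_false, not_le]
          exact ((le_abs_self _).trans (hM a)).trans_lt (not_le.1 htM)
        simp only [this, measure_empty, zero_le]
    · refine ne_of_lt (lt_of_le_of_lt (setLIntegral_le_lintegral _ _) ?_)
      rw [lintegral_indicator_const measurableSet_Ioc]
      exact ENNReal.mul_lt_top hC.lt_top (by simp)
    · refine setLIntegral_mono' measurableSet_Ioi fun t ht => ?_
      exact hsup _ ((hsub t ht).trans hfΩ) (hcomp t ht)

/-- Continuity of the real Monge-Ampère operator: if convex functions `u k` converge pointwise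
on `Ω` to a convex function `u`, then the Monge-Ampère measures converge weakly, i.e. tested
against any continuous function with compact support in `Ω`. -/
theorem mongeAmpere_weak_continuity {n : ℕ}
    (Ω : Set (EuclideanSpace ℝ (Fin n))) (hΩopen : IsOpen Ω) (hΩconv : Convex ℝ Ω)
    (hΩbd : Bornology.IsBounded Ω)
    (u : ℕ → EuclideanSpace ℝ (Fin n) → ℝ) (ulim : EuclideanSpace ℝ (Fin n) → ℝ)
    (hconv : ∀ k, ConvexOn ℝ Ω (u k)) (hlimconv : ConvexOn ℝ Ω ulim)
    (hptwise : ∀ x ∈ Ω, Tendsto (fun k => u k x) atTop (nhds (ulim x)))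
    (μ : ℕ → Measure (EuclideanSpace ℝ (Fin n))) (ν : Measure (EuclideanSpace ℝ (Fin n)))
    (hμ : ∀ k, ∀ E : Set (EuclideanSpace ℝ (Fin n)), MeasurableSet E → E ⊆ Ω →
      μ k E = volume (⋃ x ∈ E, gradientImage Ω (u k) x))
    (hν : ∀ E : Set (EuclideanSpace ℝ (Fin n)), MeasurableSet E → E ⊆ Ω →
      ν E = volume (⋃ x ∈ E, gradientImage Ω ulim x)) :
    ∀ f : EuclideanSpace ℝ (Fin n) → ℝ, Continuous f → HasCompactSupport f →
      tsupport f ⊆ Ω →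
      Tendsto (fun k => ∫ x, f x ∂(μ k)) atTop (nhds (∫ x, f x ∂ν)) := by
  have hfin : ∀ K ⊆ Ω, IsCompact K → ∃ C : ENNReal, C ≠ ⊤ ∧ ∀ k, μ k K ≤ C := by
    intro K hKΩ hK
    obtain ⟨R, hR⟩ := gradBound hΩopen hΩconv hconv hptwise hK hKΩ
    refine ⟨volume (Metric.closedBall (0 : EuclideanSpace ℝ (Fin n)) R),
      measure_closedBall_lt_top.ne, fun k => ?_⟩
    rw [hμ k K hK.measurableSet hKΩ]
    exact measure_mono (Set.iUnion₂_subset (hR k))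
  have hfinν : ∀ K ⊆ Ω, IsCompact K → ν K ≠ ⊤ := by
    intro K hKΩ hK
    rw [hν K hK.measurableSet hKΩ]
    exact (gradCompact hΩopen hΩconv hlimconv hK hKΩ).measure_ne_top
  have hsup : ∀ K ⊆ Ω, IsCompact K → limsup (fun k => μ k K) atTop ≤ ν K := by
    intro K hKΩ hK
    rw [hν K hK.measurableSet hKΩ]
    simp_rw [fun k => hμ k K hK.measurableSet hKΩ]
    exact limsupCompact hΩopen hΩconv hconv hptwise hK hKΩ
  have hinf : ∀ G ⊆ Ω, IsOpen G → ν G ≤ liminf (fun k => μ k G) atTop := by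
    intro G hGΩ hG
    simp_rw [fun k => hμ k G hG.measurableSet hGΩ]
    exact liminfOpen hΩopen hΩconv hΩbd hconv hlimconv hptwise hν hG hGΩ
  intro f hf hfc hfΩ
  have hint : ∀ m : Measure (EuclideanSpace ℝ (Fin n)), m (tsupport f) ≠ ⊤ → Integrable f m := by
    intro m hm
    rw [← integrableOn_iff_integrable_of_support_subset (subset_tsupport f)]
    exact hf.continuousOn.integrableOn_of_subset_isCompact hfc
      (isClosed_tsupport f).measurableSet Set.Subset.rfl hm
  have hintμ : ∀ k, Integrable f (μ k) := fun k => by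
    obtain ⟨C, hC, hCk⟩ := hfin _ hfΩ hfc
    exact hint _ (ne_top_of_le_ne_top hC (hCk k))
  have hintν : Integrable f ν := hint _ (hfinν _ hfΩ hfc)
  have hpart : ∀ g : EuclideanSpace ℝ (Fin n) → ℝ, Continuous g → HasCompactSupport g →
      tsupport g ⊆ Ω → Integrable g ν →
      Tendsto (fun k => (∫⁻ x, ENNReal.ofReal (g x) ∂(μ k)).toReal) atTop
        (nhds (∫⁻ x, ENNReal.ofReal (g x) ∂ν).toReal) := by
    intro g hg hgc hgΩ hgi
    have hts : tsupport (fun x => max (g x) 0) ⊆ tsupport g := by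
      apply closure_mono
      intro x hx h0
      simp only [Function.mem_support] at hx
      exact hx (by simp [h0])
    have h := nonnegCase hΩopen hfin hsup hinf (f := fun x => max (g x) 0) (by fun_prop)
      (IsCompact.of_isClosed_subset hgc (isClosed_tsupport _) hts) (hts.trans hgΩ)
      (fun x => le_max_right _ _)
    have e : ∀ x, ENNReal.ofReal (max (g x) 0) = ENNReal.ofReal (g x) := fun x => by
      simp [ENNReal.ofReal, Real.toNNReal]
    simp_rw [e] at h
    refine (ENNReal.tendsto_toReal ?_).comp h
    exact ((lintegral_mono fun x => Real.ofReal_le_enorm (g x)).trans_lt hgi.2).ne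
  have hneg : tsupport (fun x => - f x) = tsupport f := by
    simp [tsupport, Function.support]
  simp_rw [fun k => integral_eq_lintegral_pos_part_sub_lintegral_neg_part (hintμ k),
    integral_eq_lintegral_pos_part_sub_lintegral_neg_part hintν]
  refine (hpart f hf hfc hfΩ hintν).sub (hpart (fun x => - f x) hf.neg ?_ ?_ hintν.neg)
  · rw [HasCompactSupport, hneg]; exact hfc
  · rw [hneg]; exact hfΩ
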